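/- There exist constants c₁, c₂ > 0, depending only on d and α, such that c₁ |ξ|^α ≤ ψ(ξ) ≤ c₂ |ξ|^α for every ξ ∈ ℝ^d with |ξ| ≥ 1; i.e. the truncated stable characteristic exponent ψ behaves like |ξ|^α near infinity. -/

import Mathlib

open MeasureTheory

/-- The constant `A(d, -α) = α 2^{α-1} π^{-d/2} Γ((d+α)/2) / Γ(1-α/2)`. -/
noncomputable def stableA (d : ℕ) (α : ℝ) : ℝ :=
  α * (2 : ℝ) ^ (α - 1) * Real.pi ^ (-(d : ℝ) / 2) * Real.Gamma (((d : ℝ) + α) / 2) /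
    Real.Gamma (1 - α / 2)

/-- The truncated stable characteristic exponent
`ψ(ξ) = A(d,-α) ∫_{|y|<1} (1 - cos(ξ·y)) |y|^{-d-α} dy`. -/
noncomputable def truncPsi (d : ℕ) (α : ℝ) (ξ : EuclideanSpace ℝ (Fin d)) : ℝ :=
  stableA d α *
    ∫ y in Metric.ball (0 : EuclideanSpace ℝ (Fin d)) 1,
      (1 - Real.cos (inner ℝ ξ y)) * ‖y‖ ^ (-(d : ℝ) - α)


/-!
The substitution `z = |ξ| y` and rotation invariance give, for any unit vector `e`,
`ψ(ξ) = |ξ|^α A(d,-α) ∫_{|z| < |ξ|} (1 - cos(e·z)) |z|^{-d-α} dz`. The integral over `|z| < |ξ|` is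
nondecreasing in `|ξ|`, so for `|ξ| ≥ 1` the ratio `ψ(ξ) / |ξ|^α` lies between `ψ(e)` and the
exponent at `e` of the untruncated stable process. The latter is finite since the integrand is
`O(|z|^{2-d-α})` at the origin and `O(|z|^{-d-α})` at infinity, with `0 < α < 2`.
-/

open Metric hiding smul_ball
open Module Real

open scoped InnerProductSpace Pointwise Topology

lemma stableA_pos (d : ℕ) {α : ℝ} (hα : 0 < α) (hα2 : α < 2) : 0 < stableA d α :=
  div_pos (mul_pos (by positivity) (Gamma_pos_of_pos (by positivity)))
    (Gamma_pos_of_pos (by linarith))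

variable {E : Type*} [NormedAddCommGroup E] [InnerProductSpace ℝ E]

/-- The integrand `(1 - cos ⟨ξ, y⟩) |y|^{-d-α}` of the Lévy–Khintchine formula for the isotropic
`α`-stable law on a Euclidean space of dimension `d = finrank ℝ E`, without the constant
`A(d,-α)`. -/
noncomputable def stableIntegrand (α : ℝ) (ξ y : E) : ℝ :=
  (1 - cos ⟪ξ, y⟫_ℝ) * ‖y‖ ^ (-(finrank ℝ E : ℝ) - α)

section Integrand

variable {α : ℝ}

lemma stableIntegrand_nonneg (α : ℝ) (ξ y : E) : 0 ≤ stableIntegrand α ξ y :=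
  mul_nonneg (sub_nonneg.2 (cos_le_one _)) (by positivity)

lemma stableIntegrand_pos {ξ y : E} (hpos : 0 < ⟪ξ, y⟫_ℝ) (hlt : ⟪ξ, y⟫_ℝ < 2 * π) :
    0 < stableIntegrand α ξ y := by
  have hy : y ≠ 0 := by
    rintro rfl
    simp at hpos
  have hcos : cos ⟪ξ, y⟫_ℝ ≠ 1 := fun h =>
    hpos.ne' ((cos_eq_one_iff_of_lt_of_lt (by linarith [pi_pos]) hlt).1 h)
  exact mul_pos (sub_pos.2 ((cos_le_one _).lt_of_ne hcos)) (by positivity)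

lemma stableIntegrand_smul_left {r : ℝ} (hr : 0 < r) (α : ℝ) (ξ y : E) :
    stableIntegrand α (r • ξ) y = r ^ (finrank ℝ E + α) * stableIntegrand α ξ (r • y) := by
  have hcancel : r ^ (finrank ℝ E + α) * r ^ (-(finrank ℝ E : ℝ) - α) = 1 := by
    rw [← rpow_add hr, show finrank ℝ E + α + (-(finrank ℝ E : ℝ) - α) = 0 by ring, rpow_zero]
  rw [stableIntegrand, stableIntegrand, real_inner_smul_left, real_inner_smul_right, norm_smul,
    norm_of_nonneg hr.le, mul_rpow hr.le (norm_nonneg y)]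
  linear_combination -((1 - cos (r * ⟪ξ, y⟫_ℝ)) * ‖y‖ ^ (-(finrank ℝ E : ℝ) - α)) * hcancel

lemma stableIntegrand_map (f : E ≃ₗᵢ[ℝ] E) (α : ℝ) (ξ y : E) :
    stableIntegrand α (f ξ) (f y) = stableIntegrand α ξ y := by
  rw [stableIntegrand, stableIntegrand, f.inner_map_map, f.norm_map]

lemma one_sub_cos_inner_le (x y : E) : 1 - cos ⟪x, y⟫_ℝ ≤ ‖x‖ ^ 2 / 2 * ‖y‖ ^ 2 := by
  have hcos := one_sub_sq_div_two_le_cos (x := ⟪x, y⟫_ℝ)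
  have hinner : ⟪x, y⟫_ℝ ^ 2 ≤ (‖x‖ * ‖y‖) ^ 2 :=
    sq_le_sq.2 ((abs_real_inner_le_norm x y).trans (le_abs_self _))
  linarith [mul_pow ‖x‖ ‖y‖ 2]

lemma stableIntegrand_le_norm_rpow (α : ℝ) (ξ y : E) :
    stableIntegrand α ξ y ≤ ‖ξ‖ ^ 2 / 2 * ‖y‖ ^ (-(finrank ℝ E + α - 2)) := by
  rcases eq_or_ne y 0 with rfl | hy
  · rw [stableIntegrand, inner_zero_right, cos_zero, sub_self, zero_mul]
    positivity
  · calc stableIntegrand α ξ y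
        ≤ ‖ξ‖ ^ 2 / 2 * ‖y‖ ^ 2 * ‖y‖ ^ (-(finrank ℝ E : ℝ) - α) := by
          unfold stableIntegrand
          gcongr
          exact one_sub_cos_inner_le ξ y
      _ = ‖ξ‖ ^ 2 / 2 * ‖y‖ ^ (-(finrank ℝ E + α - 2)) := by
          rw [mul_assoc, ← rpow_two ‖y‖, ← rpow_add (norm_pos_iff.2 hy)]
          congr 2
          ring

lemma stableIntegrand_le_of_one_le_norm (hα : 0 < α) (ξ : E) {y : E} (hy : 1 ≤ ‖y‖) :
    stableIntegrand α ξ y ≤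
      2 * 2 ^ (finrank ℝ E + α) * (1 + ‖y‖) ^ (-(finrank ℝ E + α)) := by
  have hcos : 1 - cos ⟪ξ, y⟫_ℝ ≤ 2 := by linarith [neg_one_le_cos ⟪ξ, y⟫_ℝ]
  have hnorm : (1 + ‖y‖) / 2 ≤ ‖y‖ := by linarith
  calc stableIntegrand α ξ y
      ≤ 2 * ((1 + ‖y‖) / 2) ^ (-(finrank ℝ E + α)) := by
        rw [stableIntegrand, ← neg_add']
        refine mul_le_mul hcos ?_ (by positivity) zero_le_two
        exact rpow_le_rpow_of_nonpos (by positivity) hnorm (neg_nonpos.2 (by positivity))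
    _ = 2 * 2 ^ (finrank ℝ E + α) * (1 + ‖y‖) ^ (-(finrank ℝ E + α)) := by
        rw [div_rpow (by positivity) zero_le_two, rpow_neg zero_le_two, div_inv_eq_mul]
        ring

variable [MeasurableSpace E] [BorelSpace E]

@[fun_prop]
lemma measurable_stableIntegrand (α : ℝ) (ξ : E) : Measurable (stableIntegrand α ξ) := by
  unfold stableIntegrand
  fun_prop

variable [FiniteDimensional ℝ E] {μ : Measure E} [μ.IsAddHaarMeasure]

lemma integrableOn_ball_stableIntegrand (hα2 : α < 2) (ξ : E) (R : ℝ) :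
    IntegrableOn (stableIntegrand α ξ) (ball 0 R) μ := by
  rcases subsingleton_or_nontrivial E with _ | _
  · exact Integrable.of_finite
  refine integrableOn_ball_of_norm_le_rpow finrank_pos (C := ‖ξ‖ ^ 2 / 2)
    (α := finrank ℝ E + α - 2) (by linarith) (.of_forall fun y => ?_) (by fun_prop)
  rw [norm_of_nonneg (stableIntegrand_nonneg α ξ y)]
  exact stableIntegrand_le_norm_rpow α ξ y

lemma integrableOn_compl_ball_stableIntegrand (hα : 0 < α) (ξ : E) :
    IntegrableOn (stableIntegrand α ξ) (ball 0 1)ᶜ μ := by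
  have hbound : Integrable (fun y : E => 2 * 2 ^ (finrank ℝ E + α) *
      (1 + ‖y‖) ^ (-(finrank ℝ E + α))) μ :=
    (integrable_one_add_norm (by linarith)).const_mul _
  refine hbound.integrableOn.mono' (by fun_prop) ?_
  filter_upwards [ae_restrict_mem measurableSet_ball.compl] with y hy
  rw [norm_of_nonneg (stableIntegrand_nonneg α ξ y)]
  exact stableIntegrand_le_of_one_le_norm hα ξ (by simpa using hy)

lemma integrable_stableIntegrand (hα : 0 < α) (hα2 : α < 2) (ξ : E) :
    Integrable (stableIntegrand α ξ) μ := by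
  rw [← integrableOn_univ, ← Set.union_compl_self (ball (0 : E) 1)]
  exact (integrableOn_ball_stableIntegrand hα2 ξ 1).union
    (integrableOn_compl_ball_stableIntegrand hα ξ)

end Integrand

section Exponent

variable [FiniteDimensional ℝ E] [MeasurableSpace E] [BorelSpace E] {α : ℝ}

/-- The characteristic exponent of the isotropic `α`-stable Lévy process on `E` whose jumps are
restricted to `s`: the unit ball gives the truncated process, the whole space the stable process
itself. -/
noncomputable def stableExponent (s : Set E) (α : ℝ) (ξ : E) : ℝ :=
  stableA (finrank ℝ E) α * ∫ y in s, stableIntegrand α ξ y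

lemma truncPsi_eq_stableExponent (d : ℕ) (α : ℝ) (ξ : EuclideanSpace ℝ (Fin d)) :
    truncPsi d α ξ = stableExponent (ball 0 1) α ξ := by
  simp only [truncPsi, stableExponent, stableIntegrand, finrank_euclideanSpace_fin]

lemma stableExponent_mono (hα : 0 < α) (hα2 : α < 2) {s t : Set E} (hst : s ⊆ t) (ξ : E) :
    stableExponent s α ξ ≤ stableExponent t α ξ :=
  mul_le_mul_of_nonneg_left
    (setIntegral_mono_set (integrable_stableIntegrand hα hα2 ξ).integrableOn
      (.of_forall (stableIntegrand_nonneg α ξ)) hst.eventuallyLE)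
    (stableA_pos _ hα hα2).le

lemma stableExponent_ball_pos (hα : 0 < α) (hα2 : α < 2) {ξ : E} (hξ : ξ ≠ 0)
    {R : ℝ} (hR : 0 < R) : 0 < stableExponent (ball 0 R) α ξ := by
  refine mul_pos (stableA_pos _ hα hα2) ?_
  rw [setIntegral_pos_iff_support_of_nonneg_ae (.of_forall (stableIntegrand_nonneg α ξ))
    (integrableOn_ball_stableIntegrand hα2 ξ R)]
  let V : Set E := {y | ⟪ξ, y⟫_ℝ < 2 * π} ∩ ball 0 R
  let U : Set E := {y | 0 < ⟪ξ, y⟫_ℝ} ∩ V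
  have hVopen : IsOpen V := (isOpen_lt (by fun_prop) (by fun_prop)).inter isOpen_ball
  have hUopen : IsOpen U := (isOpen_lt (by fun_prop) (by fun_prop)).inter hVopen
  have hUne : U.Nonempty := by
    have hsmall : ∀ᶠ t : ℝ in 𝓝[>] 0, t • ξ ∈ V :=
      nhdsWithin_le_nhds ((hVopen.preimage (f := fun t : ℝ => t • ξ) (by fun_prop)).mem_nhds
        (by simp [V, hR, pi_pos]))
    obtain ⟨t, htV, ht⟩ := (hsmall.and self_mem_nhdsWithin).exists
    refine ⟨t • ξ, ?_, htV⟩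
    rw [Set.mem_ofPred_eq, real_inner_smul_right]
    exact mul_pos ht (real_inner_self_pos.2 hξ)
  refine (hUopen.measure_pos volume hUne).trans_le (measure_mono ?_)
  exact fun y hy => ⟨(stableIntegrand_pos hy.1 hy.2.1).ne', hy.2.2⟩

lemma stableExponent_smul {r : ℝ} (hr : 0 < r) (s : Set E) (α : ℝ) (ξ : E) :
    stableExponent s α (r • ξ) = r ^ α * stableExponent (r • s) α ξ := by
  simp only [stableExponent, stableIntegrand_smul_left hr, integral_const_mul,
    Measure.setIntegral_comp_smul_of_pos volume _ _ hr, smul_eq_mul, rpow_add hr, rpow_natCast]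
  field_simp

lemma stableExponent_image (f : E ≃ₗᵢ[ℝ] E) (s : Set E) (α : ℝ) (ξ : E) :
    stableExponent (f '' s) α (f ξ) = stableExponent s α ξ := by
  simp only [stableExponent, f.measurePreserving.setIntegral_image_emb
    f.toHomeomorph.measurableEmbedding, stableIntegrand_map]

lemma stableExponent_ball_congr_norm {ξ η : E} (h : ‖ξ‖ = ‖η‖) (R α : ℝ) :
    stableExponent (ball 0 R) α ξ = stableExponent (ball 0 R) α η := by
  rw [← stableExponent_image ((ℝ ∙ (ξ - η))ᗮ.reflection) _ α ξ, Submodule.reflection_sub h,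
    LinearIsometryEquiv.image_ball, map_zero]

lemma stableExponent_ball_eq_norm_rpow_mul {e ξ : E} (he : ‖e‖ = 1) (hξ : ξ ≠ 0) (R α : ℝ) :
    stableExponent (ball 0 R) α ξ = ‖ξ‖ ^ α * stableExponent (ball 0 (‖ξ‖ * R)) α e := by
  have hpos : 0 < ‖ξ‖ := norm_pos_iff.2 hξ
  calc stableExponent (ball 0 R) α ξ
      = stableExponent (ball 0 R) α (‖ξ‖ • e) :=
        stableExponent_ball_congr_norm (by rw [norm_smul, norm_norm, he, mul_one]) R α
    _ = ‖ξ‖ ^ α * stableExponent (ball 0 (‖ξ‖ * R)) α e := by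
        rw [stableExponent_smul hpos, smul_ball hpos.ne', smul_zero, norm_norm]

end Exponent

theorem statement3_general [FiniteDimensional ℝ E] [MeasurableSpace E] [BorelSpace E]
    [Nontrivial E] {α : ℝ} (hα : 0 < α) (hα2 : α < 2) :
    ∃ c₁ c₂ : ℝ, 0 < c₁ ∧ 0 < c₂ ∧ ∀ ξ : E, 1 ≤ ‖ξ‖ →
      c₁ * ‖ξ‖ ^ α ≤ stableExponent (ball 0 1) α ξ ∧
        stableExponent (ball 0 1) α ξ ≤ c₂ * ‖ξ‖ ^ α := by
  obtain ⟨e, he⟩ := exists_norm_eq E zero_le_one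
  have he0 : e ≠ 0 := norm_pos_iff.1 (he ▸ one_pos)
  have hpos := stableExponent_ball_pos hα hα2 he0 one_pos
  refine ⟨stableExponent (ball 0 1) α e, stableExponent Set.univ α e, hpos,
    hpos.trans_le (stableExponent_mono hα hα2 (Set.subset_univ _) e), fun ξ hξ => ?_⟩
  have hξ0 : ξ ≠ 0 := norm_pos_iff.1 (one_pos.trans_le hξ)
  rw [stableExponent_ball_eq_norm_rpow_mul he hξ0, mul_one, mul_comm _ (‖ξ‖ ^ α),
    mul_comm _ (‖ξ‖ ^ α)]
  constructor <;> gcongr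
  · exact stableExponent_mono hα hα2 (ball_subset_ball hξ) e
  · exact stableExponent_mono hα hα2 (Set.subset_univ _) e

/-- `ψ(ξ)` is comparable to `|ξ|^α` for `|ξ| ≥ 1`, with constants
depending only on `d` and `α`. -/
theorem statement3 (d : ℕ) (hd : 2 ≤ d) (α : ℝ) (hα : 0 < α) (hα2 : α < 2) :
    ∃ c₁ c₂ : ℝ, 0 < c₁ ∧ 0 < c₂ ∧
      ∀ ξ : EuclideanSpace ℝ (Fin d), 1 ≤ ‖ξ‖ →
        c₁ * ‖ξ‖ ^ α ≤ truncPsi d α ξ ∧ truncPsi d α ξ ≤ c₂ * ‖ξ‖ ^ α := by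
  have : NeZero d := ⟨by omega⟩
  simpa only [truncPsi_eq_stableExponent] using
    statement3_general (E := EuclideanSpace ℝ (Fin d)) hα hα2
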